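/- For every t ≥ 1, the top-left n×n block M₁(t) of the product M(t) = P̂(t)⋯P̂(1) is row stochastic: all its entries are nonnegative and each of its rows sums to exactly 1. -/

import Mathlib

open Matrix Filter BigOperators
open scoped Classical

noncomputable section

/-- A directed graph on `Fin n` with `m` directed edges, edge `e` going from
`src e` to `tgt e`. -/
structure DGraph (n m : ℕ) where
  src : Fin m → Fin n
  tgt : Fin m → Fin n

/-- Hypotheses of the random-delay consensus model: no self-loops, distinct edges,
`P` row stochastic respecting `G` (hence with positive diagonal), and `G` strongly
connected. -/
structure DGraph.Valid {n m : ℕ} (G : DGraph n m) (P : Matrix (Fin n) (Fin n) ℝ) : Prop where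
  noSelf : ∀ e, G.src e ≠ G.tgt e
  edgeInj : ∀ e e', G.src e = G.src e' → G.tgt e = G.tgt e' → e = e'
  nonneg : ∀ i j, 0 ≤ P i j
  rowSum : ∀ i, ∑ j, P i j = 1
  support : ∀ i j, 0 < P i j ↔ i = j ∨ ∃ e, G.src e = j ∧ G.tgt e = i
  connected : ∀ i j : Fin n,
    Relation.ReflTransGen (fun a b => ∃ e, G.src e = a ∧ G.tgt e = b) i j

/-- Delay nodes: for every directed edge `e : Fin m`, every chain-length index
`ℓ : Fin B` (the parallel chain modelling a delay of `ℓ.1 + 1`), and every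
position `k : Fin B` with `k ≤ ℓ` along that chain.  There are `m·B(B+1)/2`
of them in total. -/
def DelayNode (m B : ℕ) : Type :=
  {q : Fin m × Fin B × Fin B // q.2.2.1 ≤ q.2.1.1}

instance (m B : ℕ) : Fintype (DelayNode m B) := by
  unfold DelayNode; infer_instance

instance (m B : ℕ) : DecidableEq (DelayNode m B) := by
  unfold DelayNode; infer_instance

namespace RandomDelay

variable {n m B : ℕ}

/-- The edge a delay node belongs to. -/
def edgeOf (d : DelayNode m B) : Fin m := d.val.1
/-- The chain (of length `lenIdx d + 1`) a delay node belongs to. -/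
def lenIdx (d : DelayNode m B) : ℕ := d.val.2.1.1
/-- The (0-indexed) position of a delay node along its chain. -/
def posIdx (d : DelayNode m B) : ℕ := d.val.2.2.1
/-- `d` is the terminal node of its chain. -/
def isTerminal (d : DelayNode m B) : Prop := d.val.2.2 = d.val.2.1

/-- The fixed block-diagonal forward-shift matrix `C`: a message at position `k`
of a chain moves to position `k+1` of the same chain. -/
def Cmat (m B : ℕ) : Matrix (DelayNode m B) (DelayNode m B) ℝ := fun d d' =>
  if d.val.1 = d'.val.1 ∧ d.val.2.1 = d'.val.2.1 ∧ posIdx d = posIdx d' + 1 then 1 else 0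

/-- The fixed delivery matrix `J`: `J i d = 1` iff `d` is the terminal node of a
chain on an edge pointing into compute node `i`. -/
def Jmat (G : DGraph n m) (B : ℕ) : Matrix (Fin n) (DelayNode m B) ℝ := fun i d =>
  if G.tgt (edgeOf d) = i ∧ isTerminal d then 1 else 0

/-- `L(t)`: zero-delay deliveries.  `L t i j = 1` iff at iteration `t` node `j`
sends its message on the edge `j → i` with zero delay. -/
def Lmat (G : DGraph n m) (del : ℕ → Fin m → Fin (B + 1)) (t : ℕ) :
    Matrix (Fin n) (Fin n) ℝ := fun i j =>
  if ∃ e, G.src e = j ∧ G.tgt e = i ∧ (del t e).1 = 0 then 1 else 0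

/-- `R(t)`: routing of messages into delay chains.  `R t d j = 1` iff `d` is the
first node of the chain of length `ℓ+1` on an edge out of `j`, and at iteration
`t` node `j`'s message on that edge is assigned delay `ℓ+1`. -/
def Rmat (G : DGraph n m) (del : ℕ → Fin m → Fin (B + 1)) (t : ℕ) :
    Matrix (DelayNode m B) (Fin n) ℝ := fun d j =>
  if G.src (edgeOf d) = j ∧ posIdx d = 0 ∧ (del t (edgeOf d)).1 = lenIdx d + 1 then 1 else 0

/-- Occupancy vector: `φ 0 = 0` and `φ t = R(t)·1 + C·φ(t-1)`. -/
def phi (G : DGraph n m) (del : ℕ → Fin m → Fin (B + 1)) : ℕ → DelayNode m B → ℝ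
  | 0 => fun _ => 0
  | t + 1 => Rmat G del (t + 1) *ᵥ (fun _ => 1) + Cmat m B *ᵥ phi G del t

/-- `ŵ_{ij}(t)`: the number of delay chains from `j` to `i` whose terminal node is
occupied at time `t - 1`, i.e. the number of delayed messages `i` receives from `j`
at iteration `t`. -/
def wgt (G : DGraph n m) (del : ℕ → Fin m → Fin (B + 1)) (t : ℕ) (i j : Fin n) : ℕ :=
  (Finset.univ.filter (fun d : DelayNode m B =>
    G.tgt (edgeOf d) = i ∧ G.src (edgeOf d) = j ∧ isTerminal d ∧
      phi G del (t - 1) d = 1)).card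

/-- Total number of messages (delayed plus undelayed) that `i` receives from `j`
at iteration `t`, as a real number. -/
def denom (G : DGraph n m) (del : ℕ → Fin m → Fin (B + 1)) (t : ℕ) (i j : Fin n) : ℝ :=
  (wgt G del t i j : ℝ) + Lmat G del t i j

/-- `P̄[L(t)]`: each entry `1` of `L(t)` (a zero-delay message from `j` to `i`) is
replaced with the weight `P i j / (ŵ_{ij} + L_{ij}(t))`. -/
def PLmat (G : DGraph n m) (P : Matrix (Fin n) (Fin n) ℝ)
    (del : ℕ → Fin m → Fin (B + 1)) (t : ℕ) : Matrix (Fin n) (Fin n) ℝ := fun i j =>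
  Lmat G del t i j * (P i j / denom G del t i j)

/-- `P̄[φ(t-1)]`: each entry `1` of `J·diag(φ(t-1))` (a delayed message from `j`
delivered to `i`) is replaced with the weight `P i j / (ŵ_{ij} + L_{ij}(t))`. -/
def PFmat (G : DGraph n m) (P : Matrix (Fin n) (Fin n) ℝ)
    (del : ℕ → Fin m → Fin (B + 1)) (t : ℕ) : Matrix (Fin n) (DelayNode m B) ℝ := fun i d =>
  Jmat G B i d * phi G del (t - 1) d *
    (P i (G.src (edgeOf d)) / denom G del t i (G.src (edgeOf d)))

/-- Top-left block `P̂₁₁(t) = I − diag(P̄[φ(t−1)]·1_b + P̄[L(t)]·1_n) + P̄[L(t)]`. -/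
def P11 (G : DGraph n m) (P : Matrix (Fin n) (Fin n) ℝ)
    (del : ℕ → Fin m → Fin (B + 1)) (t : ℕ) : Matrix (Fin n) (Fin n) ℝ :=
  1 - Matrix.diagonal (fun i => (∑ d, PFmat G P del t i d) + (∑ j, PLmat G P del t i j))
    + PLmat G P del t

/-- The delayed transition matrix
`P̂(t) = [[P̂₁₁(t), P̄[φ(t−1)]], [R(t), C]]`. -/
def Phat (G : DGraph n m) (P : Matrix (Fin n) (Fin n) ℝ)
    (del : ℕ → Fin m → Fin (B + 1)) (t : ℕ) :
    Matrix (Fin n ⊕ DelayNode m B) (Fin n ⊕ DelayNode m B) ℝ :=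
  Matrix.fromBlocks (P11 G P del t) (PFmat G P del t) (Rmat G del t) (Cmat m B)

/-- The state: `x̂(0) = (x(0), 0_b)` and `x̂(t) = P̂(t)·x̂(t−1)`. -/
def xhat (G : DGraph n m) (P : Matrix (Fin n) (Fin n) ℝ)
    (del : ℕ → Fin m → Fin (B + 1)) (x0 : Fin n → ℝ) :
    ℕ → (Fin n ⊕ DelayNode m B) → ℝ
  | 0 => Sum.elim x0 (fun _ => 0)
  | t + 1 => Phat G P del (t + 1) *ᵥ xhat G P del x0 t

/-- The product `M(t) = P̂(t)·P̂(t−1)⋯P̂(1)` (with `M(0) = I`). -/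
def Mprod (G : DGraph n m) (P : Matrix (Fin n) (Fin n) ℝ)
    (del : ℕ → Fin m → Fin (B + 1)) :
    ℕ → Matrix (Fin n ⊕ DelayNode m B) (Fin n ⊕ DelayNode m B) ℝ
  | 0 => 1
  | t + 1 => Phat G P del (t + 1) * Mprod G P del t

/-- Top-left `n × n` block of `M(t)`. -/
def M1 (G : DGraph n m) (P : Matrix (Fin n) (Fin n) ℝ)
    (del : ℕ → Fin m → Fin (B + 1)) (t : ℕ) : Matrix (Fin n) (Fin n) ℝ :=
  fun i j => Mprod G P del t (Sum.inl i) (Sum.inl j)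

/-- Bottom-left `b × n` block of `M(t)`. -/
def M2 (G : DGraph n m) (P : Matrix (Fin n) (Fin n) ℝ)
    (del : ℕ → Fin m → Fin (B + 1)) (t : ℕ) : Matrix (DelayNode m B) (Fin n) ℝ :=
  fun d j => Mprod G P del t (Sum.inr d) (Sum.inl j)

/-- A node is occupied at time `t` if it is a compute node, or a delay node `d`
with `φ_d(t) = 1`. -/
def occupied (G : DGraph n m) (del : ℕ → Fin m → Fin (B + 1)) (t : ℕ) :
    (Fin n ⊕ DelayNode m B) → Prop
  | Sum.inl _ => True
  | Sum.inr d => phi G del t d = 1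

/-- Maximum of the state over the occupied nodes at time `t`. -/
def occMax (G : DGraph n m) (P : Matrix (Fin n) (Fin n) ℝ)
    (del : ℕ → Fin m → Fin (B + 1)) (x0 : Fin n → ℝ) (t : ℕ) : ℝ :=
  sSup {y : ℝ | ∃ v, occupied G del t v ∧ xhat G P del x0 t v = y}

/-- Minimum of the state over the occupied nodes at time `t`. -/
def occMin (G : DGraph n m) (P : Matrix (Fin n) (Fin n) ℝ)
    (del : ℕ → Fin m → Fin (B + 1)) (x0 : Fin n → ℝ) (t : ℕ) : ℝ :=
  sInf {y : ℝ | ∃ v, occupied G del t v ∧ xhat G P del x0 t v = y}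

end RandomDelay

end

namespace RandomDelay

variable {n m B : ℕ} (G : DGraph n m) (P : Matrix (Fin n) (Fin n) ℝ)
  (del : ℕ → Fin m → Fin (B + 1))

theorem Rmat_mulVec_one (t : ℕ) (d : DelayNode m B) :
    (Rmat G del t *ᵥ fun _ => 1) d =
      if posIdx d = 0 ∧ (del t (edgeOf d)).1 = lenIdx d + 1 then 1 else 0 := by
  simp only [Matrix.mulVec, dotProduct, Rmat, mul_one, ite_and]
  simp

/-- Every row of the shift matrix is either zero (first node of a chain) or a unit vector. -/
theorem Cmat_mulVec_cases (d : DelayNode m B) :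
    (posIdx d = 0 ∧ ∀ v, (Cmat m B *ᵥ v) d = 0) ∨
      (posIdx d ≠ 0 ∧ ∃ d', ∀ v, (Cmat m B *ᵥ v) d = v d') := by
  obtain ⟨⟨e, l, k⟩, hk⟩ := d
  rcases Nat.eq_zero_or_pos k.1 with h0 | h0
  · refine Or.inl ⟨h0, fun v => Finset.sum_eq_zero fun d' _ => ?_⟩
    have hpos : k.1 ≠ posIdx d' + 1 := by omega
    exact mul_eq_zero_of_left (if_neg fun h => hpos h.2.2) _
  · have hk' : k.1 ≤ l.1 := hk
    let d₀ : DelayNode m B := ⟨(e, l, ⟨k.1 - 1, by omega⟩), (Nat.sub_le _ _).trans hk'⟩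
    refine Or.inr ⟨h0.ne', d₀, fun v => ?_⟩
    refine (Finset.sum_eq_single d₀ (fun d' _ hd' => ?_) (by simp)).trans ?_
    · refine mul_eq_zero_of_left (if_neg ?_) _
      rintro ⟨h1, h2, h3⟩
      refine hd' (Subtype.ext (Prod.ext h1.symm (Prod.ext h2.symm (Fin.ext ?_))))
      change k.1 = d'.val.2.2.1 + 1 at h3
      change d'.val.2.2.1 = k.1 - 1
      omega
    · refine (congrArg (· * v d₀) (if_pos ⟨rfl, rfl, ?_⟩)).trans (one_mul _)
      change k.1 = k.1 - 1 + 1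
      omega

theorem phi_eq_zero_or_one (t : ℕ) (d : DelayNode m B) :
    phi G del t d = 0 ∨ phi G del t d = 1 := by
  induction t generalizing d with
  | zero => exact Or.inl rfl
  | succ t ih =>
    rw [phi, Pi.add_apply, Rmat_mulVec_one]
    rcases Cmat_mulVec_cases d with ⟨_, hC⟩ | ⟨hd, d', hC⟩
    · rw [hC]
      split_ifs <;> simp
    · rw [hC, if_neg (fun h => hd h.1), zero_add]
      exact ih d'

theorem Lmat_nonneg (t : ℕ) (i j : Fin n) : 0 ≤ Lmat G del t i j := by
  rw [Lmat]
  split_ifs <;> norm_num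

theorem denom_nonneg (t : ℕ) (i j : Fin n) : 0 ≤ denom G del t i j :=
  add_nonneg (Nat.cast_nonneg _) (Lmat_nonneg G del t i j)

variable {P}

theorem PLmat_nonneg (hP : ∀ i j, 0 ≤ P i j) (t : ℕ) (i j : Fin n) :
    0 ≤ PLmat G P del t i j :=
  mul_nonneg (Lmat_nonneg G del t i j) (div_nonneg (hP i j) (denom_nonneg G del t i j))

theorem PFmat_nonneg (hP : ∀ i j, 0 ≤ P i j) (t : ℕ) (i : Fin n) (d : DelayNode m B) :
    0 ≤ PFmat G P del t i d := by
  refine mul_nonneg (mul_nonneg ?_ ?_) (div_nonneg (hP _ _) (denom_nonneg G del t _ _))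
  · rw [Jmat]
    split_ifs <;> norm_num
  · rcases phi_eq_zero_or_one G del (t - 1) d with h | h <;> simp [h]

variable (P)

theorem sum_PFmat_eq (t : ℕ) (i : Fin n) :
    ∑ d, PFmat G P del t i d =
      ∑ j, (wgt G del t i j : ℝ) * (P i j / denom G del t i j) := by
  rw [← Finset.sum_fiberwise Finset.univ (fun d : DelayNode m B => G.src (edgeOf d))]
  refine Finset.sum_congr rfl fun j _ => ?_
  rw [wgt, ← nsmul_eq_mul, ← Finset.sum_const, Finset.sum_filter, Finset.sum_filter]
  refine Finset.sum_congr rfl fun d _ => ?_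
  by_cases hj : G.src (edgeOf d) = j
  · subst hj
    rcases phi_eq_zero_or_one G del (t - 1) d with h | h
    · simp [PFmat, h]
    · simp [PFmat, Jmat, h]
  · simp [hj]

variable {P}

/-- The total weight of the messages received by a node is at most the row sum of `P`. -/
theorem sum_PFmat_add_sum_PLmat_le (hP : ∀ i j, 0 ≤ P i j) (t : ℕ) (i : Fin n) :
    ∑ d, PFmat G P del t i d + ∑ j, PLmat G P del t i j ≤ ∑ j, P i j := by
  rw [sum_PFmat_eq, ← Finset.sum_add_distrib]
  refine Finset.sum_le_sum fun j _ => ?_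
  rw [PLmat, ← add_mul, ← denom]
  rcases eq_or_ne (denom G del t i j) 0 with h | h
  · simpa [h] using hP i j
  · rw [mul_div_cancel₀ _ h]

theorem P11_nonneg (hV : G.Valid P) (t : ℕ) (i j : Fin n) : 0 ≤ P11 G P del t i j := by
  have hL := PLmat_nonneg G del hV.nonneg t i j
  have hS := sum_PFmat_add_sum_PLmat_le G del hV.nonneg t i
  rw [hV.rowSum] at hS
  rcases eq_or_ne i j with rfl | h
  · simp only [P11, Matrix.add_apply, Matrix.sub_apply, Matrix.one_apply_eq,
      Matrix.diagonal_apply_eq]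
    linarith
  · simpa [P11, h] using hL

theorem Phat_nonneg (hV : G.Valid P) (t : ℕ) (u v : Fin n ⊕ DelayNode m B) :
    0 ≤ Phat G P del t u v := by
  rcases u with i | d <;> rcases v with j | d'
  · exact P11_nonneg G del hV t i j
  · exact PFmat_nonneg G del hV.nonneg t i d'
  · simp only [Phat, Matrix.fromBlocks_apply₂₁, Rmat]
    split_ifs <;> norm_num
  · simp only [Phat, Matrix.fromBlocks_apply₂₂, Cmat]
    split_ifs <;> norm_num

theorem Mprod_nonneg (hV : G.Valid P) (t : ℕ) (u v : Fin n ⊕ DelayNode m B) :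
    0 ≤ Mprod G P del t u v := by
  induction t generalizing u with
  | zero =>
    rw [Mprod, Matrix.one_apply]
    split_ifs <;> norm_num
  | succ t ih =>
    exact Finset.sum_nonneg fun w _ => mul_nonneg (Phat_nonneg G del hV _ u w) (ih w)

variable (P)

theorem P11_mulVec_one_add_PFmat_mulVec_phi (t : ℕ) :
    (P11 G P del (t + 1) *ᵥ fun _ => 1) + PFmat G P del (t + 1) *ᵥ phi G del t =
      fun _ => 1 := by
  funext i
  have hF : (PFmat G P del (t + 1) *ᵥ phi G del t) i = ∑ d, PFmat G P del (t + 1) i d := by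
    refine Finset.sum_congr rfl fun d _ => ?_
    rcases phi_eq_zero_or_one G del t d with h | h <;> simp [PFmat, h]
  rw [Pi.add_apply, hF]
  simp [Matrix.mulVec, dotProduct, P11, Finset.sum_add_distrib, Finset.sum_sub_distrib,
    Matrix.one_apply, Matrix.diagonal_apply]
  ring

/-- Propagating the all-ones compute state keeps the compute nodes at one, and the delay nodes
at their occupancy. -/
theorem Mprod_mulVec_one (t : ℕ) :
    Mprod G P del t *ᵥ Sum.elim (fun _ => 1) (fun _ => 0) =
      Sum.elim (fun _ => 1) (phi G del t) := by
  induction t with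
  | zero => rw [Mprod, Matrix.one_mulVec]; rfl
  | succ t ih =>
    rw [Mprod, ← Matrix.mulVec_mulVec, ih, Phat, Matrix.fromBlocks_mulVec]
    simp only [Sum.elim_comp_inl, Sum.elim_comp_inr]
    rw [P11_mulVec_one_add_PFmat_mulVec_phi]
    rfl

end RandomDelay

open RandomDelay in
/-- **`M₁(t)` is row stochastic.**  For every `t ≥ 1`, the top-left `n × n` block
`M₁(t)` of the product `M(t) = P̂(t)⋯P̂(1)` has nonnegative entries and each of its
rows sums to exactly `1`. -/
theorem random_delay_M1_row_stochastic
    {n m B : ℕ} (hn : 0 < n) (hB : 1 ≤ B)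
    (G : DGraph n m) (P : Matrix (Fin n) (Fin n) ℝ) (hV : G.Valid P)
    (del : ℕ → Fin m → Fin (B + 1)) (t : ℕ) (ht : 1 ≤ t) :
    (∀ i j, 0 ≤ M1 G P del t i j) ∧ (∀ i, ∑ j, M1 G P del t i j = 1) := by
  refine ⟨fun i j => Mprod_nonneg G del hV t _ _, fun i => ?_⟩
  simpa [Matrix.mulVec, dotProduct, M1] using congrFun (Mprod_mulVec_one G P del t) (Sum.inl i)
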